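/- Let X be a nonempty closed subset of ℝⁿ, H a properly constrained hypothesis on X, and Φ : X → ℝᵐ a constraint for H. Then the dual e-class E_H^∨ = {x ↦ 1 − λ·Φ(x) : λ ∈ Λ_Φ}, where Λ_Φ = {λ ∈ ℝᵐ : sup_{x∈X} λ·Φ(x) ≤ 1}, is the optimal e-class for H: it is a majorising e-class and it is contained in every majorising e-class. -/

import Mathlib

/-!
The given constraint `Φ` and the proper constraint of `H` are related only through `H`: a nonzero
finite measure for which `Φ` is integrable integrates `Φ` to zero iff its normalisation lies in `H`.
For finitely supported measures, that is, nonnegative finitely supported weights `a` on `X`, this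
says that all constraints of `H` have the same nonnegative relations `∑ a x • Φ x = 0`. A proper
constraint has relations charging any prescribed point, because `0` is in the relative interior of
the convex hull of its range; hence so does `Φ`.

An e-variable `E` satisfies `∑ a x * (1 - E x) ≥ 0` on every relation `a`. By the M. Riesz extension
theorem, applied in the space of finitely supported functions on `X`, this is enough for some linear
`l` to satisfy `l (Φ x) ≤ 1 - E x` for all `x`, i.e. `E` is majorised by a dual e-variable. For a
dual e-variable the sum vanishes on every relation, so an e-variable majorising it agrees with it on
the support of every relation, i.e. everywhere: dual e-variables are maximal.
-/

open MeasureTheory Set ENNReal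

noncomputable section

/-- The (topological) support of a Borel measure: the set of points all of whose open
neighbourhoods have positive measure. -/
def msupport {α : Type*} [TopologicalSpace α] [MeasurableSpace α]
    (P : Measure α) : Set α :=
  {x | ∀ U : Set α, IsOpen U → x ∈ U → 0 < P U}

variable {α : Type*} [TopologicalSpace α] [MeasurableSpace α] {X : Set α} {m : ℕ}

/-- A hypothesis on `X`: a nonempty set of Borel probability measures (on `X`,
identified with the Borel probability measures supported in `X`). -/
def IsHypothesis (H : Set (Measure X)) : Prop :=
  H.Nonempty ∧ ∀ P ∈ H, IsProbabilityMeasure P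

/-- An e-variable with respect to `H`: a Borel measurable nonnegative function whose
expectation is at most one under every `P ∈ H`. -/
def IsEVar (H : Set (Measure X)) (E : X → ℝ) : Prop :=
  Measurable E ∧ (∀ x, 0 ≤ E x) ∧ ∀ P ∈ H, ∫⁻ x, ENNReal.ofReal (E x) ∂P ≤ 1

/-- `f` majorises `g` if `f(x) ≥ g(x)` for every `x ∈ X`. -/
def Majorises (f g : X → ℝ) : Prop := ∀ x, g x ≤ f x

/-- A maximal e-variable: an e-variable with no strict majoriser among e-variables. -/
def IsMaximalEVar (H : Set (Measure X)) (E : X → ℝ) : Prop :=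
  IsEVar H E ∧ ¬ ∃ E', IsEVar H E' ∧ Majorises E' E ∧ E' ≠ E

/-- A majorising e-class: an e-class such that every e-variable is majorised by
one of its elements. -/
def IsMajorisingClass (H : Set (Measure X)) (C : Set (X → ℝ)) : Prop :=
  (∀ E ∈ C, IsEVar H E) ∧ ∀ E, IsEVar H E → ∃ E' ∈ C, Majorises E' E

/-- The optimal e-class: a majorising e-class contained in every majorising e-class. -/
def IsOptimalClass (H : Set (Measure X)) (C : Set (X → ℝ)) : Prop :=
  IsMajorisingClass H C ∧ ∀ C', IsMajorisingClass H C' → C ⊆ C'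

/-- `P ∈ P_Φ`: the expectation of the ℓ¹-norm of `Φ` under `P` is finite. -/
def MemPPhi (P : Measure X) (Φ : X → Fin m → ℝ) : Prop :=
  ∫⁻ x, ENNReal.ofReal (∑ i, |Φ x i|) ∂P < ⊤

/-- `Φ` is a constraint for `H`: `Φ` is continuous and `H` is exactly the set of Borel
probability measures `P ∈ P_Φ` with `⟨P, Φ⟩ = 0`. -/
def IsConstraint (H : Set (Measure X)) (Φ : X → Fin m → ℝ) : Prop :=
  Continuous Φ ∧
    H = {P : Measure X | IsProbabilityMeasure P ∧ MemPPhi P Φ ∧ ∫ x, Φ x ∂P = 0}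

/-- A proper constraint: a constraint such that `0` lies in the relative interior
of the convex hull of the image of `Φ`. -/
def IsProperConstraint (H : Set (Measure X)) (Φ : X → Fin m → ℝ) : Prop :=
  IsConstraint H Φ ∧
    (0 : Fin m → ℝ) ∈ intrinsicInterior ℝ (convexHull ℝ (Set.range Φ))

/-- A minimal constraint: a constraint such that `0` lies in the interior
of the convex hull of the image of `Φ`. -/
def IsMinimalConstraint (H : Set (Measure X)) (Φ : X → Fin m → ℝ) : Prop :=
  IsConstraint H Φ ∧
    (0 : Fin m → ℝ) ∈ interior (convexHull ℝ (Set.range Φ))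

/-- A finitely constrained hypothesis: one admitting a constraint. -/
def FinitelyConstrained (H : Set (Measure X)) : Prop :=
  ∃ (m : ℕ) (Φ : X → Fin m → ℝ), IsConstraint H Φ

/-- A properly constrained hypothesis: one admitting a proper constraint. -/
def ProperlyConstrained (H : Set (Measure X)) : Prop :=
  ∃ (m : ℕ) (Φ : X → Fin m → ℝ), IsProperConstraint H Φ

/-- `Λ_{Φ|S} = {λ ∈ ℝᵐ : sup_{x ∈ S} λ·Φ(x) ≤ 1}`. -/
def LambdaSet (Φ : X → Fin m → ℝ) (S : Set X) : Set (Fin m → ℝ) :=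
  {l | ∀ x ∈ S, ∑ i, l i * Φ x i ≤ 1}

/-- The dual e-class `E_H^∨ = {1 - λ·Φ : λ ∈ Λ_Φ}`. -/
def dualClass (Φ : X → Fin m → ℝ) : Set (X → ℝ) :=
  {E | ∃ l ∈ LambdaSet Φ Set.univ, E = fun x => 1 - ∑ i, l i * Φ x i}

/-- A matching set for `H`: a closed set that is exactly the support of some `P ∈ H`. -/
def IsMatchingSet (H : Set (Measure X)) (S : Set X) : Prop :=
  IsClosed S ∧ ∃ P ∈ H, msupport P = S

end

section NonnegRelations

variable {ι V : Type*} [AddCommGroup V] [Module ℝ V]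

/-- The nonnegative linear relations among the vectors `Φ x`: finitely supported weights `a ≥ 0`
with `∑ a x • Φ x = 0`. They need not be normalised. -/
def nonnegRelations (Φ : ι → V) : Set (ι →₀ ℝ) :=
  {a | 0 ≤ a ∧ Finsupp.linearCombination ℝ Φ a = 0}

/-- Every index has positive weight in some nonnegative relation among the `Φ x`; equivalently, the
convex cone generated by the `Φ x` is a linear subspace. This is the algebraic content of
`0` lying in the relative interior of the convex hull of the range of `Φ`. -/
def IsPositivelyDependent (Φ : ι → V) : Prop :=
  ∀ x, ∃ a ∈ nonnegRelations Φ, 0 < a x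

lemma exists_nonneg_linearCombination_eq_of_mem_convexHull {Φ : ι → V} {v : V}
    (hv : v ∈ convexHull ℝ (range Φ)) :
    ∃ a : ι →₀ ℝ, 0 ≤ a ∧ Finsupp.linearCombination ℝ Φ a = v := by
  have hconvex : Convex ℝ (Finsupp.linearCombination ℝ Φ '' Ici (0 : ι →₀ ℝ)) :=
    (convex_Ici 0).linear_image _
  refine convexHull_min ?_ hconvex hv
  rintro _ ⟨x, rfl⟩
  exact ⟨Finsupp.single x 1, by simp, by simp⟩

lemma exists_pos_neg_smul_mem_of_zero_mem_intrinsicInterior [TopologicalSpace V]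
    [ContinuousSMul ℝ V] {s : Set V} (h0 : (0 : V) ∈ intrinsicInterior ℝ s) {v : V} (hv : v ∈ s) :
    ∃ ε : ℝ, 0 < ε ∧ -ε • v ∈ s := by
  obtain ⟨y, hy, hy0⟩ := mem_intrinsicInterior.1 h0
  have hzero : (0 : V) ∈ affineSpan ℝ s := hy0 ▸ y.2
  have hline (t : ℝ) : t • v ∈ affineSpan ℝ s := by
    simpa [AffineMap.lineMap_apply_module] using
      AffineMap.lineMap_mem t hzero (subset_affineSpan ℝ s hv)
  let line : ℝ → affineSpan ℝ s := fun t => ⟨-t • v, hline (-t)⟩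
  have hcont : Continuous line := by fun_prop
  have hline0 : line 0 = y := Subtype.ext (by simp [line, hy0])
  have hnear : ∀ᶠ t in nhds 0, line t ∈ interior ((↑) ⁻¹' s) :=
    hcont.continuousAt.eventually_mem (isOpen_interior.mem_nhds (hline0 ▸ hy))
  obtain ⟨ε, hmem, hε⟩ :=
    ((hnear.filter_mono nhdsWithin_le_nhds).and (self_mem_nhdsWithin (s := Ioi 0))).exists
  exact ⟨ε, hε, (interior_subset hmem : line ε ∈ ((↑) ⁻¹' s : Set (affineSpan ℝ s)))⟩

lemma isPositivelyDependent_of_zero_mem_intrinsicInterior [TopologicalSpace V]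
    [ContinuousSMul ℝ V] {Φ : ι → V}
    (h0 : (0 : V) ∈ intrinsicInterior ℝ (convexHull ℝ (range Φ))) :
    IsPositivelyDependent Φ := by
  intro x
  obtain ⟨ε, hε, hmem⟩ := exists_pos_neg_smul_mem_of_zero_mem_intrinsicInterior h0
    (subset_convexHull ℝ _ (mem_range_self x))
  obtain ⟨a, ha, haΦ⟩ := exists_nonneg_linearCombination_eq_of_mem_convexHull hmem
  refine ⟨a + Finsupp.single x ε, ⟨add_nonneg ha (Finsupp.single_nonneg.2 hε.le), ?_⟩, ?_⟩
  · simp [haΦ]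
  · simpa using add_pos_of_nonneg_of_pos (ha x) hε

namespace IsPositivelyDependent

variable {Φ : ι → V} {F : ι → ℝ}

lemma exists_linearCombination_eq_zero_and_add_nonneg (hΦ : IsPositivelyDependent Φ)
    (y : ι →₀ ℝ) : ∃ d : ι →₀ ℝ, Finsupp.linearCombination ℝ Φ d = 0 ∧ 0 ≤ d + y := by
  induction y using Finsupp.induction_linear with
  | zero => exact ⟨0, by simp, by simp⟩
  | add y z hy hz =>
    obtain ⟨d, hd, hdy⟩ := hy
    obtain ⟨e, he, hez⟩ := hz
    refine ⟨d + e, by rw [map_add, hd, he, add_zero], ?_⟩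
    rw [add_add_add_comm]
    exact add_nonneg hdy hez
  | single x r =>
    obtain ⟨a, ⟨ha, haΦ⟩, hax⟩ := hΦ x
    have hscale : Finsupp.single x |r| ≤ (|r| / a x) • a := by
      intro z
      rcases eq_or_ne z x with rfl | hzx
      · simp [div_mul_cancel₀ _ hax.ne']
      · simpa [Finsupp.single_eq_of_ne hzx] using
          mul_nonneg (div_nonneg (abs_nonneg r) hax.le) (ha z)
    have hr : 0 ≤ Finsupp.single x |r| + Finsupp.single x r := by
      rw [← Finsupp.single_add, Finsupp.single_nonneg]
      linarith [neg_abs_le r]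
    exact ⟨(|r| / a x) • a, by rw [map_smul, haΦ, smul_zero], hr.trans (by gcongr)⟩

lemma exists_dual_le (hΦ : IsPositivelyDependent Φ)
    (hF : ∀ a ∈ nonnegRelations Φ, 0 ≤ Finsupp.linearCombination ℝ F a) :
    ∃ l : Module.Dual ℝ V, ∀ x, l (Φ x) ≤ F x := by
  let T := Finsupp.linearCombination ℝ Φ
  let S := Finsupp.linearCombination ℝ F
  obtain ⟨g, hgS, hg⟩ := riesz_extension (PointedCone.positive ℝ (ι →₀ ℝ))
    ⟨LinearMap.ker T, S.domRestrict (LinearMap.ker T)⟩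
    (fun a ha => hF a ⟨ha, a.2⟩)
    (fun y =>
      let ⟨d, hd, hdy⟩ := hΦ.exists_linearCombination_eq_zero_and_add_nonneg y
      ⟨⟨d, hd⟩, hdy⟩)
  have hfactor : S - g ∈ LinearMap.range T.dualMap := by
    rw [LinearMap.range_dualMap_eq_dualAnnihilator_ker, Submodule.mem_dualAnnihilator]
    intro a ha
    exact sub_eq_zero.2 (hgS ⟨a, ha⟩).symm
  obtain ⟨l, hl⟩ := hfactor
  refine ⟨l, fun x => ?_⟩
  have hlx : l (Φ x) = F x - g (Finsupp.single x 1) := by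
    simpa [T, S] using LinearMap.congr_fun hl (Finsupp.single x 1)
  have hgx : 0 ≤ g (Finsupp.single x 1) := hg _ (Finsupp.single_nonneg.2 zero_le_one)
  linarith

lemma eq_dual_of_le (hΦ : IsPositivelyDependent Φ)
    (hF : ∀ a ∈ nonnegRelations Φ, 0 ≤ Finsupp.linearCombination ℝ F a)
    {l : Module.Dual ℝ V} (hle : ∀ x, F x ≤ l (Φ x)) (x : ι) : F x = l (Φ x) := by
  obtain ⟨a, ha, hax⟩ := hΦ x
  have hterm : ∀ y ∈ a.support, a y * F y ≤ a y * l (Φ y) :=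
    fun y _ => mul_le_mul_of_nonneg_left (hle y) (ha.1 y)
  have hsum : ∑ y ∈ a.support, a y * l (Φ y) = 0 := by
    simpa [Finsupp.linearCombination_apply, Finsupp.sum] using congrArg l ha.2
  have hsum_le : ∑ y ∈ a.support, a y * l (Φ y) ≤ ∑ y ∈ a.support, a y * F y :=
    hsum.trans_le (hF a ha)
  have heq := (Finset.sum_eq_sum_iff_of_le hterm).1 (le_antisymm (Finset.sum_le_sum hterm) hsum_le)
  exact mul_left_cancel₀ hax.ne' (heq x (Finsupp.mem_support_iff.2 hax.ne'))

end IsPositivelyDependent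

end NonnegRelations

section AtomicMeasure

variable {ι : Type*} [MeasurableSpace ι] {a : ι →₀ ℝ}

/-- The finitely supported measure with mass `a x` at `x`. Negative weights are truncated to `0`,
so this is only meaningful for `0 ≤ a`. -/
noncomputable def atomicMeasure (a : ι →₀ ℝ) : Measure ι :=
  ∑ x ∈ a.support, ENNReal.ofReal (a x) • Measure.dirac x

instance atomicMeasure.instIsFiniteMeasure (a : ι →₀ ℝ) : IsFiniteMeasure (atomicMeasure a) := by
  constructor
  simp [atomicMeasure]

lemma lintegral_ofReal_atomicMeasure (ha : 0 ≤ a) {f : ι → ℝ} (hf : Measurable f) (h0 : 0 ≤ f) :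
    ∫⁻ x, ENNReal.ofReal (f x) ∂atomicMeasure a
      = ENNReal.ofReal (Finsupp.linearCombination ℝ f a) := by
  simp only [atomicMeasure, lintegral_finsetSum_measure, Finsupp.linearCombination_apply,
    Finsupp.sum, smul_eq_mul]
  rw [ENNReal.ofReal_sum_of_nonneg fun x _ => mul_nonneg (ha x) (h0 x)]
  refine Finset.sum_congr rfl fun x _ => ?_
  rw [lintegral_smul_measure, lintegral_dirac' x hf.ennreal_ofReal, smul_eq_mul,
    ENNReal.ofReal_mul (ha x)]

variable {G : Type*} [NormedAddCommGroup G] {f : ι → G}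

lemma integrable_atomicMeasure (a : ι →₀ ℝ) (hf : StronglyMeasurable f) :
    Integrable f (atomicMeasure a) :=
  integrable_finsetSum_measure.2 fun _ _ =>
    (integrable_dirac' hf enorm_lt_top).smul_measure ENNReal.ofReal_ne_top

lemma integral_atomicMeasure [NormedSpace ℝ G] [CompleteSpace G] (ha : 0 ≤ a)
    (hf : StronglyMeasurable f) :
    ∫ x, f x ∂atomicMeasure a = Finsupp.linearCombination ℝ f a := by
  rw [atomicMeasure, integral_finsetSum_measure fun _ _ =>
    (integrable_dirac' hf enorm_lt_top).smul_measure ENNReal.ofReal_ne_top,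
    Finsupp.linearCombination_apply, Finsupp.sum]
  refine Finset.sum_congr rfl fun x _ => ?_
  rw [integral_smul_measure, integral_dirac' _ _ hf, ENNReal.toReal_ofReal (ha x)]

end AtomicMeasure

section EVariables

variable {α : Type*} {X : Set α} {m k : ℕ} {Φ : X → Fin m → ℝ} {Ψ : X → Fin k → ℝ} {E : X → ℝ}

lemma mem_dualClass_iff_exists_dual :
    E ∈ dualClass Φ ↔
      ∃ l : Module.Dual ℝ (Fin m → ℝ), (∀ x, l (Φ x) ≤ 1) ∧ E = fun x => 1 - l (Φ x) := by
  simp [(dotProductEquiv ℝ (Fin m)).surjective.exists, dualClass, LambdaSet, dotProduct]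

variable [MeasurableSpace α] {H : Set (Measure X)}

lemma IsMajorisingClass.mem_of_isMaximalEVar {C : Set (X → ℝ)} (hC : IsMajorisingClass H C)
    (hE : IsMaximalEVar H E) : E ∈ C := by
  obtain ⟨E', hE'C, hmaj⟩ := hC.2 E hE.1
  have heq : E' = E := by
    by_contra hne
    exact hE.2 ⟨E', hC.1 E' hE'C, hmaj, hne⟩
  exact heq ▸ hE'C

variable [TopologicalSpace α] [OpensMeasurableSpace X]

lemma memPPhi_iff_integrable (hΦ : Continuous Φ) {μ : Measure X} :
    MemPPhi μ Φ ↔ Integrable Φ μ := by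
  have hsum_nonneg : 0 ≤ fun x => ∑ i, |Φ x i| :=
    fun x => Finset.sum_nonneg fun i _ => abs_nonneg (Φ x i)
  have hsum_meas : AEStronglyMeasurable (fun x => ∑ i, |Φ x i|) μ :=
    Continuous.aestronglyMeasurable (by fun_prop)
  have hmem : MemPPhi μ Φ ↔ Integrable (fun x => ∑ i, |Φ x i|) μ := by
    rw [Integrable, hasFiniteIntegral_iff_ofReal (.of_forall hsum_nonneg)]
    exact (and_iff_right hsum_meas).symm
  rw [hmem]
  refine ⟨fun h => h.mono' hΦ.aestronglyMeasurable (.of_forall fun x => ?_),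
    fun h => integrable_finsetSum _ fun i _ => (h.eval i).abs⟩
  refine (pi_norm_le_iff_of_nonneg (hsum_nonneg x)).2 fun i => ?_
  exact Finset.single_le_sum (f := fun i => |Φ x i|) (fun i _ => abs_nonneg _) (Finset.mem_univ i)

namespace IsConstraint

lemma mem_iff (hΦ : IsConstraint H Φ) {P : Measure X} :
    P ∈ H ↔ IsProbabilityMeasure P ∧ Integrable Φ P ∧ ∫ x, Φ x ∂P = 0 := by
  rw [← memPPhi_iff_integrable hΦ.1]
  exact Set.ext_iff.1 hΦ.2 P

lemma inv_smul_mem_iff (hΦ : IsConstraint H Φ) {μ : Measure X} [IsFiniteMeasure μ] [NeZero μ]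
    (hμ : Integrable Φ μ) : (μ univ)⁻¹ • μ ∈ H ↔ ∫ x, Φ x ∂μ = 0 := by
  have hmass : (μ univ)⁻¹.toReal ≠ 0 := by simp [ENNReal.toReal_eq_zero_iff, NeZero.ne μ]
  rw [hΦ.mem_iff, integral_smul_measure, smul_eq_zero_iff_right hmass]
  exact ⟨fun h => h.2.2, fun h => ⟨inferInstance, hμ.smul_measure (by simp [NeZero.ne μ]), h⟩⟩

lemma integral_eq_zero_iff (hΦ : IsConstraint H Φ) (hΨ : IsConstraint H Ψ) {μ : Measure X}
    [IsFiniteMeasure μ] (hμΦ : Integrable Φ μ) (hμΨ : Integrable Ψ μ) :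
    ∫ x, Φ x ∂μ = 0 ↔ ∫ x, Ψ x ∂μ = 0 := by
  rcases eq_zero_or_neZero μ with rfl | _
  · simp
  · rw [← hΦ.inv_smul_mem_iff hμΦ, hΨ.inv_smul_mem_iff hμΨ]

lemma nonnegRelations_eq (hΦ : IsConstraint H Φ) (hΨ : IsConstraint H Ψ) :
    nonnegRelations Φ = nonnegRelations Ψ := by
  ext a
  refine and_congr_right fun ha => ?_
  have hΦm := hΦ.1.stronglyMeasurable
  have hΨm := hΨ.1.stronglyMeasurable
  rw [← integral_atomicMeasure ha hΦm, ← integral_atomicMeasure ha hΨm]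
  exact hΦ.integral_eq_zero_iff hΨ (integrable_atomicMeasure a hΦm) (integrable_atomicMeasure a hΨm)

lemma isPositivelyDependent (hΦ : IsConstraint H Φ) (hH : ProperlyConstrained H) :
    IsPositivelyDependent Φ := by
  obtain ⟨_, Ψ, hΨ, h0⟩ := hH
  rw [IsPositivelyDependent, hΦ.nonnegRelations_eq hΨ]
  exact isPositivelyDependent_of_zero_mem_intrinsicInterior h0

lemma lintegral_le_measure_univ (hΦ : IsConstraint H Φ) (hE : IsEVar H E) {μ : Measure X}
    [IsFiniteMeasure μ] (hμ : Integrable Φ μ) (h0 : ∫ x, Φ x ∂μ = 0) :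
    ∫⁻ x, ENNReal.ofReal (E x) ∂μ ≤ μ univ := by
  rcases eq_zero_or_neZero μ with rfl | _
  · simp
  · have hle := hE.2.2 _ ((hΦ.inv_smul_mem_iff hμ).2 h0)
    rwa [lintegral_smul_measure, smul_eq_mul, mul_comm, ← div_eq_mul_inv,
      ENNReal.div_le_iff (NeZero.ne _) (measure_ne_top μ univ), one_mul] at hle

lemma linearCombination_one_sub_nonneg (hΦ : IsConstraint H Φ) (hE : IsEVar H E) {a : X →₀ ℝ}
    (ha : a ∈ nonnegRelations Φ) : 0 ≤ Finsupp.linearCombination ℝ (fun x => 1 - E x) a := by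
  have hΦm := hΦ.1.stronglyMeasurable
  have hmass : atomicMeasure a univ = ENNReal.ofReal (Finsupp.linearCombination ℝ 1 a) := by
    simpa using lintegral_ofReal_atomicMeasure ha.1 (f := 1) measurable_one zero_le_one
  have hle := hΦ.lintegral_le_measure_univ hE (integrable_atomicMeasure a hΦm)
    ((integral_atomicMeasure ha.1 hΦm).trans ha.2)
  have hmass_nonneg : 0 ≤ Finsupp.linearCombination ℝ (1 : X → ℝ) a :=
    Finset.sum_nonneg fun x _ => mul_nonneg (ha.1 x) zero_le_one
  rw [lintegral_ofReal_atomicMeasure ha.1 hE.1 hE.2.1, hmass,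
    ENNReal.ofReal_le_ofReal_iff hmass_nonneg] at hle
  simpa [Finsupp.linearCombination_apply, Finsupp.sum, mul_sub] using hle

lemma isEVar_of_mem_dualClass (hΦ : IsConstraint H Φ) (hE : E ∈ dualClass Φ) : IsEVar H E := by
  obtain ⟨l, hl, rfl⟩ := mem_dualClass_iff_exists_dual.1 hE
  have h0 (x : X) : 0 ≤ 1 - l (Φ x) := sub_nonneg.2 (hl x)
  let L := LinearMap.toContinuousLinearMap l
  have hcont : Continuous fun x => 1 - l (Φ x) := continuous_const.sub (L.continuous.comp hΦ.1)
  refine ⟨hcont.measurable, h0, fun P hP => ?_⟩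
  obtain ⟨_, hint, hzero⟩ := hΦ.mem_iff.1 hP
  have hLint : Integrable (fun x => l (Φ x)) P := L.integrable_comp hint
  have hLzero : ∫ x, l (Φ x) ∂P = 0 := by
    rw [← L.map_zero, ← hzero]
    exact L.integral_comp_comm hint
  have hone : ∫ x, (1 - l (Φ x)) ∂P = 1 := by
    simp [integral_sub (integrable_const 1) hLint, hLzero]
  have hsub : Integrable (fun x => 1 - l (Φ x)) P := (integrable_const 1).sub hLint
  rw [← ofReal_integral_eq_lintegral_ofReal hsub (.of_forall h0), hone, ENNReal.ofReal_one]

lemma exists_mem_dualClass_majorises (hΦ : IsConstraint H Φ) (hpos : IsPositivelyDependent Φ)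
    (hE : IsEVar H E) : ∃ E' ∈ dualClass Φ, Majorises E' E := by
  obtain ⟨l, hl⟩ := hpos.exists_dual_le fun _ ha => hΦ.linearCombination_one_sub_nonneg hE ha
  have hl_one (x : X) : l (Φ x) ≤ 1 := (hl x).trans (sub_le_self 1 (hE.2.1 x))
  exact ⟨_, mem_dualClass_iff_exists_dual.2 ⟨l, hl_one, rfl⟩, fun x => le_sub_comm.1 (hl x)⟩

lemma isMaximalEVar_of_mem_dualClass (hΦ : IsConstraint H Φ) (hpos : IsPositivelyDependent Φ)
    (hE : E ∈ dualClass Φ) : IsMaximalEVar H E := by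
  refine ⟨hΦ.isEVar_of_mem_dualClass hE, ?_⟩
  rintro ⟨E', hE', hmaj, hne⟩
  obtain ⟨l, -, rfl⟩ := mem_dualClass_iff_exists_dual.1 hE
  have heq := hpos.eq_dual_of_le (fun _ ha => hΦ.linearCombination_one_sub_nonneg hE' ha)
    (fun x => sub_le_comm.1 (hmaj x))
  exact hne (funext fun x => by linarith [heq x])

end IsConstraint

theorem statement12_general (hH : ProperlyConstrained H) (hΦ : IsConstraint H Φ) :
    IsOptimalClass H (dualClass Φ) := by
  have hpos : IsPositivelyDependent Φ := hΦ.isPositivelyDependent hH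
  exact ⟨⟨fun _ => hΦ.isEVar_of_mem_dualClass, fun _ => hΦ.exists_mem_dualClass_majorises hpos⟩,
    fun _ hC _ hE => hC.mem_of_isMaximalEVar (hΦ.isMaximalEVar_of_mem_dualClass hpos hE)⟩

end EVariables

/-- for a properly constrained hypothesis, the dual e-class is the
optimal e-class. -/
theorem statement12 {n m : ℕ} {X : Set (EuclideanSpace ℝ (Fin n))}
    (hXc : IsClosed X) (hXne : X.Nonempty)
    (H : Set (Measure X)) (hHne : H.Nonempty) (hpc : ProperlyConstrained H)
    (Φ : X → Fin m → ℝ) (hΦ : IsConstraint H Φ) :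
    IsOptimalClass H (dualClass Φ) := by
  exact statement12_general hpc hΦ
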